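/- Let w be an infinite word over a finite alphabet A beginning with a letter x, and let y ∈ A be a letter with y ≠ x. Then R_y(w) is quasiperiodic if and only if w is quasiperiodic. Moreover, if q is a quasiperiod of R_y(w), then one of the following holds: (1) q = R_y(q') for some quasiperiod q' of w; (2) q y = R_y(q' z) for some letter z ≠ y and some word q' such that both q' and q' z are quasiperiods of w. -/

import Mathlib

/-!
Since `w 0 ≠ y`, a quasiperiod `q` of `R_y(w)` starts with a letter other than `y`.  In
`R_y(w)` such letters only occur at the start of a block `R_y(b)`, so every occurrence of
`q` is at a block boundary.  Writing `φ n = |R_y(w_0 ⋯ w_{n-1})|` (`blockPos`) for the block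
boundaries, occurrences of `R_y(u)` at `φ k` in `R_y(w)` correspond exactly to occurrences of
`u` at `k` in `w` (`occursAt_Rm_iff`), and the gap conditions transfer because `φ` is strictly
increasing.  This settles the case where the prefix `q` ends at a block boundary.

Otherwise `q` stops in the middle of a block `z y`, so that `q = R_y(q') z`.  Each occurrence
of `q` then extends to an occurrence of `R_y(q' z)`.  Consecutive occurrences of `q`
are at block boundaries not beyond the end of `q`, hence not beyond the end of `R_y(q')`, since
the end of `q` is not a block boundary; so both `q'` and `q' z` are quasiperiods of `w`.
-/


namespace EpiQP

/-- `u` is a prefix of the infinite word `w`. -/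
def IsPref {σ : Type*} (u : List σ) (w : ℕ → σ) : Prop :=
  ∀ (i : ℕ) (h : i < u.length), u.get ⟨i, h⟩ = w i

/-- The prefix of length `n` of the infinite word `w`. -/
def prefWord {σ : Type*} (w : ℕ → σ) (n : ℕ) : List σ :=
  List.ofFn (fun i : Fin n => w i)

/-- The finite word `u` occurs in the infinite word `w` at position `k`. -/
def OccursAt {σ : Type*} (u : List σ) (w : ℕ → σ) (k : ℕ) : Prop :=
  ∀ (i : ℕ) (h : i < u.length), u.get ⟨i, h⟩ = w (k + i)

/-- `u` is a (finite) factor of the infinite word `w`. -/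
def IsFactorInf {σ : Type*} (u : List σ) (w : ℕ → σ) : Prop :=
  ∃ k, OccursAt u w k

/-- An infinite word is recurrent if each of its factors occurs infinitely often in it. -/
def Recurrent {σ : Type*} (w : ℕ → σ) : Prop :=
  ∀ (u : List σ) (k : ℕ), OccursAt u w k → ∀ N, ∃ m, N ≤ m ∧ OccursAt u w m

/-- `u` is a quasiperiod of the infinite word `w`: `u` is non-empty and there is a
sequence of prefixes `p n ++ u` of `w` with `p 0 = ε` and
`|p n| < |p (n+1)| ≤ |p n ++ u|`. -/
def IsQuasiperiod {A : Type*} (u : List A) (w : ℕ → A) : Prop :=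
  u ≠ [] ∧ ∃ p : ℕ → List A, p 0 = [] ∧
    (∀ n, (p n).length < (p (n + 1)).length ∧
      (p (n + 1)).length ≤ (p n).length + u.length) ∧
    ∀ n, IsPref (p n ++ u) w

/-- An infinite word is quasiperiodic if it has a quasiperiod. -/
def Quasiperiodic {A : Type*} (w : ℕ → A) : Prop := ∃ u, IsQuasiperiod u w

/-- A set `X` of finite words covers the infinite word `w`. -/
def CoveredBy {A : Type*} (X : Set (List A)) (w : ℕ → A) : Prop :=
  ∃ (p z : ℕ → List A), p 0 = [] ∧ (∀ n, z n ∈ X) ∧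
    (∀ n, (p n).length < (p (n + 1)).length ∧
      (p (n + 1)).length ≤ (p n).length + (z n).length) ∧
    ∀ n, IsPref (p n ++ z n) w

/-- The morphism `L_a` : `a ↦ a`, `b ↦ ab` for `b ≠ a`. -/
def Lm {A : Type*} [DecidableEq A] (a : A) (u : List A) : List A :=
  u.flatMap (fun b => if b = a then [a] else [a, b])

/-- The morphism `R_a` : `a ↦ a`, `b ↦ ba` for `b ≠ a`. -/
def Rm {A : Type*} [DecidableEq A] (a : A) (u : List A) : List A :=
  u.flatMap (fun b => if b = a then [a] else [b, a])

/-- The pure epistandard morphism `μ_v = L_{v_1} ∘ ⋯ ∘ L_{v_k}` for `v = v_1 ⋯ v_k`. -/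
def muL {A : Type*} [DecidableEq A] (v : List A) (u : List A) : List A :=
  v.foldr Lm u

/-- The pure episturmian morphism `μ_{v̄} = R_{v_1} ∘ ⋯ ∘ R_{v_k}` for `v = v_1 ⋯ v_k`. -/
def muR {A : Type*} [DecidableEq A] (v : List A) (u : List A) : List A :=
  v.foldr Rm u

/-- Spinned letters are elements of `A × Bool`: `(a, false)` is the `L`-spinned letter `a`
and `(a, true)` is the `R`-spinned letter `ā`.  `μ` on a spinned letter. -/
def muS {A : Type*} [DecidableEq A] (x : A × Bool) : List A → List A :=
  if x.2 then Rm x.1 else Lm x.1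

/-- The pure episturmian morphism `μ_{w̆}` directed by the finite spinned word `w̆`. -/
def muW {A : Type*} [DecidableEq A] (w : List (A × Bool)) (u : List A) : List A :=
  w.foldr muS u

/-- `x` is the image of the infinite word `w` under the (letterwise) morphism whose
image on the letter `a` is `f a` (all images being non-empty). -/
def SubstOf {A : Type*} (f : A → List A) (w x : ℕ → A) : Prop :=
  ∀ n, IsPref ((prefWord w n).flatMap f) x

/-- The spinned infinite word `Δ` directs the infinite word `t`: there is a sequence
`ts` of recurrent infinite words with `ts 0 = t` and `ts n = μ_{Δ n}(ts (n+1))`. -/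
def Directs {A : Type*} [DecidableEq A] (Δ : ℕ → A × Bool) (t : ℕ → A) : Prop :=
  ∃ ts : ℕ → (ℕ → A), ts 0 = t ∧ (∀ n, Recurrent (ts n)) ∧
    ∀ n, SubstOf (fun a => muS (Δ n) [a]) (ts (n + 1)) (ts n)

/-- An infinite word is episturmian iff it is directed by some spinned infinite word. -/
def Episturmian {A : Type*} [DecidableEq A] (t : ℕ → A) : Prop :=
  ∃ Δ : ℕ → A × Bool, Directs Δ t

/-- The palindromic right-closure `w⁽⁺⁾`: the shortest palindrome having `w` as a
prefix, obtained by appending the reverse of `w` deprived of its longest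
palindromic suffix. -/
def palClosure {A : Type*} [DecidableEq A] (w : List A) : List A :=
  w ++ (w.take (w.length -
    Nat.findGreatest
      (fun k => (w.drop (w.length - k)).reverse = w.drop (w.length - k)) w.length)).reverse

/-- Iterated palindromic closure: `Pal ε = ε`, `Pal (w x) = (Pal w · x)⁽⁺⁾`. -/
def Pal {A : Type*} [DecidableEq A] (w : List A) : List A :=
  w.foldl (fun p x => palClosure (p ++ [x])) []

/-- `s` is the epistandard word directed by `Δ`, i.e. `s = lim_n Pal(Δ_1 ⋯ Δ_n)`. -/
def IsEpistandardOf {A : Type*} [DecidableEq A] (Δ : ℕ → A) (s : ℕ → A) : Prop :=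
  ∀ n, IsPref (Pal (prefWord Δ n)) s

/-- The concatenation of a finite word and an infinite word. -/
def catInf {σ : Type*} (u : List σ) (y : ℕ → σ) : ℕ → σ :=
  fun n => if h : n < u.length then u.get ⟨n, h⟩ else y (n - u.length)

/-- Prepending a letter to an infinite word. -/
def consInf {σ : Type*} (a : σ) (w : ℕ → σ) : ℕ → σ :=
  fun n => match n with
  | 0 => a
  | Nat.succ k => w k

def UltimatelyPeriodic {A : Type*} (w : ℕ → A) : Prop :=
  ∃ p N : ℕ, 0 < p ∧ ∀ n, N ≤ n → w (n + p) = w n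

/-- A factor `u` of `t` is right special if `ua`, `ub` are factors of `t` for two
distinct letters `a`, `b`. -/
def RightSpecial {A : Type*} (u : List A) (t : ℕ → A) : Prop :=
  ∃ a b : A, a ≠ b ∧ IsFactorInf (u ++ [a]) t ∧ IsFactorInf (u ++ [b]) t

/-- The combinatorial definition of episturmian words: the set of factors is closed
under reversal, and there is at most one right special factor of each length. -/
def EpisturmianC {A : Type*} (t : ℕ → A) : Prop :=
  (∀ u : List A, IsFactorInf u t → IsFactorInf u.reverse t) ∧
  ∀ u v : List A, RightSpecial u t → RightSpecial v t → u.length = v.length → u = v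

/-- The shifting factor `S_{w̆}` of `μ_{w̆}` (so that `μ_{w̆}(v) = S_{w̆}⁻¹ μ_w(v) S_{w̆}`):
`S_ε = ε`, `S_{a w̆} = L_a(S_{w̆})`, `S_{ā w̆} = L_a(S_{w̆}) a`. -/
def Sfac {A : Type*} [DecidableEq A] : List (A × Bool) → List A
  | [] => []
  | x :: v => if x.2 then Lm x.1 (Sfac v) ++ [x.1] else Lm x.1 (Sfac v)

/-- A spinned infinite word is normalized if it contains infinitely many `L`-spinned
letters but no factor of the form `ā v̄ a` (`v̄` being `R`-spinned). -/
def NormalizedInf {A : Type*} (Δ : ℕ → A × Bool) : Prop :=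
  (∀ N, ∃ n, N ≤ n ∧ (Δ n).2 = false) ∧
  ∀ (a : A) (i j : ℕ), i < j → Δ i = (a, true) →
    (∀ k, i < k → k < j → (Δ k).2 = true) → Δ j ≠ (a, false)

/-- A finite spinned word is normalized if it has no factor of the form `ā v̄ a`. -/
def NormalizedFin {A : Type*} (u : List (A × Bool)) : Prop :=
  ¬ ∃ (a : A) (w1 w2 : List (A × Bool)) (z : List A),
      u = w1 ++ (a, true) :: (z.map (fun x => (x, true)) ++ (a, false) :: w2)

/-- Strict lexicographic order on infinite words induced by the order on letters. -/
def LexLt {A : Type*} [LinearOrder A] (x y : ℕ → A) : Prop :=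
  ∃ n : ℕ, (∀ i, i < n → x i = y i) ∧ x n < y n

/-- An infinite word is an infinite Lyndon word if it is strictly lexicographically
smaller than each of its proper suffixes. -/
def InfLyndon {A : Type*} [LinearOrder A] (w : ℕ → A) : Prop :=
  ∀ i : ℕ, 0 < i → LexLt w (fun n => w (n + i))

/-- A return to `v` in `w`: the segment of `w` between two consecutive occurrences
of `v`. -/
def IsReturn {σ : Type*} (v : List σ) (w : ℕ → σ) (r : List σ) : Prop :=
  ∃ k k' : ℕ, k < k' ∧ OccursAt v w k ∧ OccursAt v w k' ∧
    (∀ j, k < j → j < k' → ¬ OccursAt v w j) ∧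
    r = List.ofFn (fun i : Fin (k' - k) => w (k + i))

/-- `u` is a quasiperiod of the finite word `z`: every position of `z` falls within
some occurrence of `u` in `z`. -/
def IsQuasiperiodFin {A : Type*} (u z : List A) : Prop :=
  u ≠ [] ∧ ∀ i, i < z.length → ∃ k, k ≤ i ∧ i < k + u.length ∧ u <+: z.drop k


/-- Quasiperiodicity in terms of the sequence of positions of occurrences, the prefixes
`p n` in the definition being determined by their lengths. -/
lemma isQuasiperiod_iff {A : Type*} (u : List A) (w : ℕ → A) :
    IsQuasiperiod u w ↔ u ≠ [] ∧ ∃ a : ℕ → ℕ, a 0 = 0 ∧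
      (∀ n, a n < a (n + 1) ∧ a (n + 1) ≤ a n + u.length) ∧ ∀ n, OccursAt u w (a n) := by
  constructor
  · rintro ⟨hu, p, h0, hlen, hp⟩
    refine ⟨hu, fun n => (p n).length, by simp [h0], hlen, fun n i hi => ?_⟩
    have := hp n ((p n).length + i) (by simp; omega)
    simpa [List.getElem_append_right] using this
  · rintro ⟨hu, a, h0, hlen, ha⟩
    refine ⟨hu, fun n => prefWord w (a n), by simp [h0, prefWord], ?_, fun n i hi => ?_⟩
    · simpa [prefWord] using hlen
    · by_cases h : i < a n
      · simp [prefWord, h]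
      · have := ha n (i - a n) (by simp [prefWord] at hi; omega)
        simp only [List.get_eq_getElem] at this
        simp [prefWord, List.getElem_append, h, this, Nat.add_sub_cancel' (not_lt.1 h)]

lemma occursAt_nil {A : Type*} (w : ℕ → A) (k : ℕ) : OccursAt [] w k :=
  fun i hi => absurd hi (by simp)

lemma occursAt_cons {A : Type*} (a : A) (u : List A) (w : ℕ → A) (k : ℕ) :
    OccursAt (a :: u) w k ↔ w k = a ∧ OccursAt u w (k + 1) := by
  constructor
  · intro h
    refine ⟨by simpa using (h 0 (by simp)).symm, fun i hi => ?_⟩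
    have := h (i + 1) (by simpa using hi)
    simpa [add_assoc, add_comm 1] using this
  · rintro ⟨h1, h2⟩ i hi
    cases i with
    | zero => simp [h1]
    | succ i =>
      have := h2 i (by simpa using hi)
      simpa [add_assoc, add_comm 1] using this

lemma occursAt_append {A : Type*} (u v : List A) (w : ℕ → A) (k : ℕ) :
    OccursAt (u ++ v) w k ↔ OccursAt u w k ∧ OccursAt v w (k + u.length) := by
  induction u generalizing k with
  | nil => simp [occursAt_nil]
  | cons a u ih =>
    rw [List.cons_append, occursAt_cons, occursAt_cons, ih, and_assoc, List.length_cons,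
      add_assoc k, add_comm 1]

lemma occursAt_singleton {A : Type*} (a : A) (w : ℕ → A) (k : ℕ) :
    OccursAt [a] w k ↔ w k = a := by
  simp [occursAt_cons, occursAt_nil]

lemma OccursAt.eq {A : Type*} {u v : List A} {w : ℕ → A} {k : ℕ} (hu : OccursAt u w k)
    (hv : OccursAt v w k) (hl : u.length = v.length) : u = v :=
  List.ext_getElem hl fun i h1 h2 => (hu i h1).trans (hv i h2).symm

lemma prefWord_succ {A : Type*} (w : ℕ → A) (n : ℕ) :
    prefWord w (n + 1) = prefWord w n ++ [w n] := by
  rw [prefWord, List.ofFn_succ_last]; simp [prefWord]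

lemma prefWord_length {A : Type*} (w : ℕ → A) (n : ℕ) : (prefWord w n).length = n := by
  simp [prefWord]

section
variable {A : Type*} [DecidableEq A]

lemma Rm_append (y : A) (u v : List A) : Rm y (u ++ v) = Rm y u ++ Rm y v := by
  simp [Rm]

lemma Rm_cons_self (y : A) (u : List A) : Rm y (y :: u) = y :: Rm y u := by
  simp [Rm]

lemma Rm_cons_ne {y a : A} (h : a ≠ y) (u : List A) : Rm y (a :: u) = a :: y :: Rm y u := by
  simp [Rm, h]

lemma Rm_singleton_ne {y a : A} (h : a ≠ y) : Rm y [a] = [a, y] := by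
  simp [Rm, h]

lemma Rm_ne_nil {y : A} {u : List A} (h : u ≠ []) : Rm y u ≠ [] := by
  cases u with
  | nil => exact absurd rfl h
  | cons a u =>
    by_cases ha : a = y
    · subst ha; simp [Rm_cons_self]
    · simp [Rm_cons_ne ha]

/-- The position in `R_y(w)` at which the image of the letter `w n` starts. -/
def blockPos (y : A) (w : ℕ → A) (n : ℕ) : ℕ := (Rm y (prefWord w n)).length

lemma blockPos_zero (y : A) (w : ℕ → A) : blockPos y w 0 = 0 := by
  simp [blockPos, prefWord, Rm]

lemma blockPos_succ (y : A) (w : ℕ → A) (n : ℕ) :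
    blockPos y w (n + 1) = blockPos y w n + if w n = y then 1 else 2 := by
  unfold blockPos
  rw [prefWord_succ, Rm_append, List.length_append]
  by_cases h : w n = y <;> simp [Rm, h]

lemma blockPos_strictMono (y : A) (w : ℕ → A) : StrictMono (blockPos y w) :=
  strictMono_nat_of_lt_succ fun n => by rw [blockPos_succ]; split_ifs <;> omega

/-- Every position of `R_y(w)` is the start of a block, or the second letter of a block of
length two. -/
lemma exists_blockPos (y : A) (w : ℕ → A) (m : ℕ) :
    ∃ n, m = blockPos y w n ∨ (m = blockPos y w n + 1 ∧ w n ≠ y) := by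
  induction m with
  | zero => exact ⟨0, Or.inl (blockPos_zero y w).symm⟩
  | succ m ih =>
    obtain ⟨n, h | ⟨h, hn⟩⟩ := ih
    · by_cases hn : w n = y
      · exact ⟨n + 1, Or.inl (by rw [blockPos_succ, if_pos hn, h])⟩
      · exact ⟨n, Or.inr ⟨by rw [h], hn⟩⟩
    · exact ⟨n + 1, Or.inl (by rw [blockPos_succ, if_neg hn, h])⟩

variable {y : A} {w Rw : ℕ → A}

lemma occursAt_Rm_prefWord (hRw : SubstOf (fun b => Rm y [b]) w Rw) (n : ℕ) :
    OccursAt (Rm y (prefWord w n)) Rw 0 := by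
  have h := hRw n
  have e : (prefWord w n).flatMap (fun b => Rm y [b]) = Rm y (prefWord w n) := by simp [Rm]
  rw [e] at h
  intro i hi
  rw [zero_add]
  exact h i hi

lemma occursAt_Rm_letter (hRw : SubstOf (fun b => Rm y [b]) w Rw) (n : ℕ) :
    OccursAt (Rm y [w n]) Rw (blockPos y w n) := by
  have h := occursAt_Rm_prefWord hRw (n + 1)
  rw [prefWord_succ, Rm_append, occursAt_append, zero_add] at h
  exact h.2

lemma apply_blockPos (hRw : SubstOf (fun b => Rm y [b]) w Rw) (n : ℕ) :
    Rw (blockPos y w n) = w n := by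
  have h := occursAt_Rm_letter hRw n
  by_cases hn : w n = y
  · rw [hn, Rm_cons_self, occursAt_cons] at h
    rw [hn, h.1]
  · rw [Rm_cons_ne hn, occursAt_cons] at h
    exact h.1

lemma apply_blockPos_add_one (hRw : SubstOf (fun b => Rm y [b]) w Rw) {n : ℕ} (hn : w n ≠ y) :
    Rw (blockPos y w n + 1) = y := by
  have h := occursAt_Rm_letter hRw n
  rw [Rm_cons_ne hn, occursAt_cons, occursAt_cons] at h
  exact h.2.1

lemma exists_blockPos_of_ne (hRw : SubstOf (fun b => Rm y [b]) w Rw) {m : ℕ} (hm : Rw m ≠ y) :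
    ∃ n, m = blockPos y w n := by
  obtain ⟨n, h | ⟨h, hn⟩⟩ := exists_blockPos y w m
  · exact ⟨n, h⟩
  · exact absurd (h ▸ apply_blockPos_add_one hRw hn) hm

/-- Occurrences of `R_y(u)` at block boundaries of `R_y(w)` are the images of the occurrences
of `u` in `w`. -/
lemma occursAt_Rm_iff (hRw : SubstOf (fun b => Rm y [b]) w Rw) (u : List A) (k : ℕ) :
    OccursAt (Rm y u) Rw (blockPos y w k) ↔ OccursAt u w k := by
  induction u generalizing k with
  | nil => simp [Rm, occursAt_nil]
  | cons a u ih =>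
    have hs := blockPos_succ y w k
    rw [occursAt_cons a u, ← ih (k + 1)]
    by_cases ha : a = y
    · rw [ha, Rm_cons_self, occursAt_cons, apply_blockPos hRw]
      refine and_congr_right fun h => ?_
      rw [hs, if_pos h]
    · rw [Rm_cons_ne ha, occursAt_cons, occursAt_cons, apply_blockPos hRw]
      refine and_congr_right fun h => ?_
      have hk : w k ≠ y := h ▸ ha
      rw [hs, if_neg hk]
      exact and_iff_right (apply_blockPos_add_one hRw hk)

lemma blockPos_add_length {u : List A} {k : ℕ} (h : OccursAt u w k) :
    blockPos y w k + (Rm y u).length = blockPos y w (k + u.length) := by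
  induction u generalizing k with
  | nil => simp [Rm]
  | cons a u ih =>
    rw [occursAt_cons] at h
    have e : k + (a :: u).length = k + 1 + u.length := by simp; omega
    rw [e, ← ih h.2, blockPos_succ, h.1]
    by_cases ha : a = y
    · subst ha; simp [Rm_cons_self]; omega
    · simp [Rm_cons_ne ha, ha]; omega

lemma isQuasiperiod_Rm (hRw : SubstOf (fun b => Rm y [b]) w Rw) {u : List A}
    (h : IsQuasiperiod u w) : IsQuasiperiod (Rm y u) Rw := by
  rw [isQuasiperiod_iff] at h ⊢
  obtain ⟨hu, a, h0, hlen, ha⟩ := h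
  refine ⟨Rm_ne_nil hu, fun n => blockPos y w (a n), by simp [h0, blockPos_zero],
    fun n => ⟨blockPos_strictMono y w (hlen n).1, ?_⟩,
    fun n => (occursAt_Rm_iff hRw u _).2 (ha n)⟩
  rw [blockPos_add_length (ha n)]
  exact (blockPos_strictMono y w).monotone (hlen n).2

lemma quasiperiod_R_cases (hw : w 0 ≠ y) (hRw : SubstOf (fun b => Rm y [b]) w Rw)
    {q : List A} (hq : IsQuasiperiod q Rw) :
    (∃ q' : List A, IsQuasiperiod q' w ∧ q = Rm y q') ∨
      (∃ (q' : List A) (z : A), z ≠ y ∧ IsQuasiperiod q' w ∧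
        IsQuasiperiod (q' ++ [z]) w ∧ q ++ [y] = Rm y (q' ++ [z])) := by
  have hmono := blockPos_strictMono y w
  obtain ⟨hne, a, h0, hlen, ha⟩ := (isQuasiperiod_iff q Rw).1 hq
  have hq0 : OccursAt q Rw 0 := h0 ▸ ha 0
  -- Occurrences of `q` are at block boundaries, since the first letter of `q` is not `y`.
  have hb : ∀ n, ∃ k, a n = blockPos y w k := by
    intro n
    apply exists_blockPos_of_ne hRw
    have hpos := List.length_pos_iff.2 hne
    have e1 := hq0 0 hpos
    have e2 := ha n 0 hpos
    have e3 := apply_blockPos hRw 0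
    rw [blockPos_zero] at e3
    rw [add_zero] at e1 e2
    rw [← e2, e1, e3]
    exact hw
  choose b hb using hb
  have hb0 : b 0 = 0 := hmono.injective (by rw [← hb 0, h0, blockPos_zero])
  have hlt : ∀ n, b n < b (n + 1) := fun n => hmono.lt_iff_lt.1 (by
    rw [← hb, ← hb]; exact (hlen n).1)
  obtain ⟨m, hm | ⟨hm, hz⟩⟩ := exists_blockPos y w q.length
  · left
    have hqe : q = Rm y (prefWord w m) := hq0.eq (occursAt_Rm_prefWord hRw m) hm
    have hocc : ∀ n, OccursAt (prefWord w m) w (b n) := fun n => by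
      rw [← occursAt_Rm_iff hRw, ← hqe, ← hb]; exact ha n
    refine ⟨prefWord w m, (isQuasiperiod_iff _ _).2 ⟨?_, b, hb0, fun n => ⟨hlt n, ?_⟩, hocc⟩, hqe⟩
    · intro h
      rw [h] at hqe
      exact hne (by simpa [Rm] using hqe)
    · rw [← hmono.le_iff_le, ← blockPos_add_length (hocc n), ← hqe, ← hb, ← hb]
      exact (hlen n).2
  · right
    have hqe : q = Rm y (prefWord w m) ++ [w m] := by
      refine hq0.eq ?_ (by simpa [blockPos] using hm)
      rw [occursAt_append, occursAt_singleton, zero_add]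
      exact ⟨occursAt_Rm_prefWord hRw m, apply_blockPos hRw m⟩
    have hocc : ∀ n, OccursAt (prefWord w m) w (b n) ∧ w (b n + m) = w m := fun n => by
      have h := ha n
      rw [hqe, hb, occursAt_append, occursAt_singleton, occursAt_Rm_iff hRw] at h
      refine ⟨h.1, ?_⟩
      have h2 := h.2
      rwa [blockPos_add_length h.1, apply_blockPos hRw, prefWord_length] at h2
    -- The end of `q` falls strictly inside the block of `z`, so the next occurrence starts
    -- no later than that block.
    have hle : ∀ n, b (n + 1) ≤ b n + m := fun n => by
      rw [← Nat.lt_succ_iff, Nat.succ_eq_add_one, ← hmono.lt_iff_lt, blockPos_succ,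
        (hocc n).2, if_neg hz, ← hb]
      have h1 := (hlen n).2
      have h2 := blockPos_add_length (y := y) (hocc n).1
      rw [prefWord_length, ← hb] at h2
      change a n + blockPos y w m = _ at h2
      omega
    refine ⟨prefWord w m, w m, hz, (isQuasiperiod_iff _ _).2 ⟨?_, b, hb0, fun n => ⟨hlt n, ?_⟩,
      fun n => (hocc n).1⟩, (isQuasiperiod_iff _ _).2 ⟨by simp, b, hb0, fun n => ⟨hlt n, ?_⟩,
      fun n => ?_⟩, ?_⟩
    · intro h
      have h1 := hlt 0
      have h2 := hle 0
      have h3 := prefWord_length w m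
      rw [h, List.length_nil] at h3
      omega
    · rw [prefWord_length]; exact hle n
    · rw [List.length_append, prefWord_length]; exact (hle n).trans (by omega)
    · rw [occursAt_append, occursAt_singleton, prefWord_length]; exact hocc n
    · rw [hqe, Rm_append, Rm_singleton_ne hz]; simp

end

/-- if `w` starts with a letter `x` and `y ≠ x`, then `R_y(w)` is
quasiperiodic iff `w` is; moreover any quasiperiod `q` of `R_y(w)` satisfies
either `q = R_y(q')` for a quasiperiod `q'` of `w`, or `q y = R_y(q' z)` for a
letter `z ≠ y` such that `q'` and `q' z` are both quasiperiods of `w`. -/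
theorem quasiperiodic_R_image
    {A : Type*} [Fintype A] [DecidableEq A]
    (w : ℕ → A) (x y : A) (hyx : y ≠ x) (hw : w 0 = x)
    (Rw : ℕ → A) (hRw : SubstOf (fun b => Rm y [b]) w Rw) :
    (Quasiperiodic Rw ↔ Quasiperiodic w) ∧
    (∀ q : List A, IsQuasiperiod q Rw →
      ((∃ q' : List A, IsQuasiperiod q' w ∧ q = Rm y q') ∨
       (∃ (q' : List A) (z : A), z ≠ y ∧ IsQuasiperiod q' w ∧
          IsQuasiperiod (q' ++ [z]) w ∧ q ++ [y] = Rm y (q' ++ [z])))) := by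
  have hw0 : w 0 ≠ y := fun h => hyx (h.symm.trans hw)
  refine ⟨⟨?_, fun ⟨u, hu⟩ => ⟨_, isQuasiperiod_Rm hRw hu⟩⟩,
    fun q hq => quasiperiod_R_cases hw0 hRw hq⟩
  rintro ⟨q, hq⟩
  obtain ⟨q', h, -⟩ | ⟨q', z, -, h, -⟩ := quasiperiod_R_cases hw0 hRw hq
  · exact ⟨q', h⟩
  · exact ⟨q', h⟩

end EpiQP
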